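/- Let d(n) denote the number of permutations of length n avoiding the patterns 4213 and 2143. Then d(1) = 1, d(2) = 2, d(3) = 6, d(4) = 22, d(5) = 88, d(6) = 366, d(7) = 1556, d(8) = 6720, d(9) = 29396, d(10) = 129996, d(11) = 580276 and d(12) = 2611290. -/

import Mathlib

open Filter Topology PowerSeries

/-- `σ` contains the pattern `π`. -/
def PatternContains {n k : ℕ} (σ : Equiv.Perm (Fin n)) (π : Fin k → Fin k) : Prop :=
  ∃ f : Fin k → Fin n, StrictMono f ∧ ∀ a b : Fin k, π a < π b ↔ σ (f a) < σ (f b)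

/-- `σ` avoids the pattern `π`. -/
def PatternAvoids {n k : ℕ} (σ : Equiv.Perm (Fin n)) (π : Fin k → Fin k) : Prop :=
  ¬ PatternContains σ π

/-- The pattern 4213 (zero-indexed values). -/
def p4213 : Fin 4 → Fin 4 := ![3, 1, 0, 2]

/-- The pattern 2413 (zero-indexed values). -/
def p2413 : Fin 4 → Fin 4 := ![1, 3, 0, 2]

/-- The pattern 2143 (zero-indexed values). -/
def p2143 : Fin 4 → Fin 4 := ![1, 0, 3, 2]

/-- The pattern 213 (zero-indexed values). -/
def p213 : Fin 3 → Fin 3 := ![1, 0, 2]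

/-- `σ` avoids 4213, 2413 and 2143. -/
def AvoidsH {n : ℕ} (σ : Equiv.Perm (Fin n)) : Prop :=
  PatternAvoids σ p4213 ∧ PatternAvoids σ p2413 ∧ PatternAvoids σ p2143

/-- `σ` avoids 4213 and 2143. -/
def AvoidsD {n : ℕ} (σ : Equiv.Perm (Fin n)) : Prop :=
  PatternAvoids σ p4213 ∧ PatternAvoids σ p2143

/-- An H-gridding of `σ`: a value cutoff `k ∈ {0,…,n}` such that the subsequence of
entries with (1-based) values `> k` is increasing and the subsequence of entries with
values `≤ k` avoids 213. -/
def HGridding {n : ℕ} (σ : Equiv.Perm (Fin n)) (k : ℕ) : Prop :=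
  k ≤ n ∧
  (∀ i j : Fin n, i < j → k < (σ i : ℕ) + 1 → k < (σ j : ℕ) + 1 → σ i < σ j) ∧
  ¬ ∃ f : Fin 3 → Fin n, StrictMono f ∧ (∀ a, (σ (f a) : ℕ) + 1 ≤ k) ∧
      (∀ a b : Fin 3, p213 a < p213 b ↔ σ (f a) < σ (f b))

/-- A G-gridding of `σ`: a pair `(j, k)` with `0 ≤ j, k ≤ n` such that (i) the first `j`
entries have values `≤ k` and are increasing, (ii) the subsequence of entries at
(1-based) positions `> j` with values `> k` is increasing, and (iii) the subsequence of
entries at positions `> j` with values `≤ k` avoids 213. -/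
def GGridding {n : ℕ} (σ : Equiv.Perm (Fin n)) (j k : ℕ) : Prop :=
  j ≤ n ∧ k ≤ n ∧
  (∀ i : Fin n, (i : ℕ) < j → (σ i : ℕ) + 1 ≤ k) ∧
  (∀ i₁ i₂ : Fin n, i₁ < i₂ → (i₂ : ℕ) < j → σ i₁ < σ i₂) ∧
  (∀ i₁ i₂ : Fin n, i₁ < i₂ → j ≤ (i₁ : ℕ) → k < (σ i₁ : ℕ) + 1 → k < (σ i₂ : ℕ) + 1 →
      σ i₁ < σ i₂) ∧
  ¬ ∃ f : Fin 3 → Fin n, StrictMono f ∧ (∀ a, j ≤ ((f a) : ℕ) ∧ (σ (f a) : ℕ) + 1 ≤ k) ∧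
      (∀ a b : Fin 3, p213 a < p213 b ↔ σ (f a) < σ (f b))

/-- The number of permutations of length `n` avoiding 4213, 2413 and 2143. -/
noncomputable def hCount (n : ℕ) : ℕ :=
  Nat.card {σ : Equiv.Perm (Fin n) // AvoidsH σ}

/-- The number of permutations of length `n` avoiding 4213 and 2143. -/
noncomputable def dCount (n : ℕ) : ℕ :=
  Nat.card {σ : Equiv.Perm (Fin n) // AvoidsD σ}

/-- The minimal number of top points over all H-griddings of `σ`. -/
noncomputable def topPts {n : ℕ} (σ : Equiv.Perm (Fin n)) : ℕ :=
  n - sSup {k | HGridding σ k}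

/-- The minimal number of left points over all G-griddings of `σ`. -/
noncomputable def leftPts {n : ℕ} (σ : Equiv.Perm (Fin n)) : ℕ :=
  sInf {j | ∃ k, GGridding σ j k}

/-!
Permutations are grown by inserting a new maximum, so that both forbidden patterns become conditions
on the site of the insertion: 4213 and 2143 are the pattern 213 with a maximum inserted, and an
occurrence of 213 at positions `i < j < k` admits a new maximum exactly between `i` and `j` or
after `k`. Such a site is called active.

Suppose that there is an active site at the end `p` of the initial increasing run, and let `a` be
the number of active sites before `p`, `b` the number of those beyond `p` within the next increasing
run, and `c` the number of the remaining ones. Inserting a maximum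

* before `p`, with `j` active sites strictly between, gives the label `(a - j, j + 1, b + c)`;
* at `p` gives `(a + 1, b, c)`;
* within the next run, with `j` active sites of that run to the right, gives `(0, 1, j + c)`;
* beyond that run kills all sites to the left of the new maximum, now and at all later insertions,
  so that multisets of the sites to the right count the continuations.

Hence the number of continuations depends on `(a, b, c)` only and is computed by a recursion.
-/

namespace MaxInsertion

open Finset Equiv

theorem sum_card_filter_lt {α M : Type*} [LinearOrder α] [AddCommMonoid M] (S : Finset α)
    (f : ℕ → M) : ∑ x ∈ S, f #{y ∈ S | x < y} = ∑ j ∈ range #S, f j := by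
  induction S using Finset.induction_on_min with
  | empty => simp
  | insert a S ha ih =>
    have haS : a ∉ S := fun h => (ha a h).false
    rw [sum_insert haS, card_insert_of_notMem haS, sum_range_succ, add_comm, ← ih]
    congr 1
    · refine sum_congr rfl fun x hx => ?_
      rw [filter_insert, if_neg (ha x hx).not_gt]
    · rw [filter_insert, if_neg (lt_irrefl a), filter_true_of_mem ha]

theorem sum_range_multichoose_succ (m k : ℕ) :
    ∑ j ∈ range m, (j + 1).multichoose k = m.multichoose (k + 1) := by
  induction m with
  | zero => simp
  | succ m ih => rw [sum_range_succ, ih, Nat.multichoose_succ_succ]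

section Pattern213

variable {n : ℕ}

/-- The entries of `σ` at positions `i`, `j`, `k` form an occurrence of the pattern 213. -/
def Is213 (σ : Perm (Fin n)) (i j k : Fin n) : Prop :=
  i < j ∧ j < k ∧ σ j < σ i ∧ σ i < σ k

theorem patternContains_of_strictMono {k : ℕ} {σ : Perm (Fin n)} {π ρ : Fin k → Fin k}
    {f : Fin k → Fin n} (hρ : ∀ a, ρ (π a) = a) (hf : StrictMono f)
    (hσ : StrictMono fun a => σ (f (ρ a))) : PatternContains σ π :=
  ⟨f, hf, fun a b => by simpa only [hρ] using (hσ.lt_iff_lt (a := π a) (b := π b)).symm⟩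

theorem patternContains_p4213_iff (σ : Perm (Fin n)) :
    PatternContains σ p4213 ↔ ∃ i j k l, Is213 σ i j k ∧ σ k < σ l ∧ l < i := by
  constructor
  · rintro ⟨f, hf, h⟩
    exact ⟨f 1, f 2, f 3, f 0, ⟨hf (by decide), hf (by decide), (h 2 1).1 (by decide),
      (h 1 3).1 (by decide)⟩, (h 3 0).1 (by decide), hf (by decide)⟩
  · rintro ⟨i, j, k, l, ⟨hij, hjk, hji, hik⟩, hkl, hli⟩
    refine patternContains_of_strictMono (f := ![l, i, j, k]) (ρ := ![2, 1, 3, 0]) (by decide) ?_ ?_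
    · simp [Fin.strictMono_iff_lt_succ, Fin.forall_fin_succ, hli, hij, hjk]
    · simp [Fin.strictMono_iff_lt_succ, Fin.forall_fin_succ, hji, hik, hkl]

theorem patternContains_p2143_iff (σ : Perm (Fin n)) :
    PatternContains σ p2143 ↔ ∃ i j k l, Is213 σ i j k ∧ σ k < σ l ∧ j < l ∧ l < k := by
  constructor
  · rintro ⟨f, hf, h⟩
    exact ⟨f 0, f 1, f 3, f 2, ⟨hf (by decide), hf (by decide), (h 1 0).1 (by decide),
      (h 0 3).1 (by decide)⟩, (h 3 2).1 (by decide), hf (by decide), hf (by decide)⟩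
  · rintro ⟨i, j, k, l, ⟨hij, -, hji, hik⟩, hkl, hjl, hlk⟩
    refine patternContains_of_strictMono (f := ![i, j, l, k]) (ρ := ![1, 0, 3, 2]) (by decide) ?_ ?_
    · simp [Fin.strictMono_iff_lt_succ, Fin.forall_fin_succ, hij, hjl, hlk]
    · simp [Fin.strictMono_iff_lt_succ, Fin.forall_fin_succ, hji, hik, hkl]

theorem avoidsD_iff (σ : Perm (Fin n)) :
    AvoidsD σ ↔ ∀ i j k, Is213 σ i j k → ∀ l, σ k < σ l → i < l ∧ l < j ∨ k < l := by
  rw [AvoidsD, PatternAvoids, PatternAvoids, patternContains_p4213_iff, patternContains_p2143_iff]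
  constructor
  · rintro ⟨h4213, h2143⟩ i j k h l hkl
    have hil : ¬ l < i := fun hli => h4213 ⟨i, j, k, l, h, hkl, hli⟩
    have hjlk : ¬ (j < l ∧ l < k) := fun hl => h2143 ⟨i, j, k, l, h, hkl, hl⟩
    grind [Is213]
  · refine fun H => ⟨?_, ?_⟩
    · rintro ⟨i, j, k, l, h, hkl, hli⟩
      have := H i j k h l hkl
      grind [Is213]
    · rintro ⟨i, j, k, l, h, hkl, hjl, hlk⟩
      have := H i j k h l hkl
      grind

end Pattern213

section InsertMax

variable {n : ℕ}

/-- The permutation obtained from `σ` by inserting a new maximum at the site `s`. The site `s` lies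
immediately before the entry of `σ` at position `s`, or after all entries if `s` is the last. -/
def insertMax (σ : Perm (Fin n)) (s : Fin (n + 1)) : Perm (Fin (n + 1)) :=
  (finSuccEquiv' s).trans ((optionCongr σ).trans (finSuccEquiv' (Fin.last n)).symm)

@[simp]
theorem insertMax_self (σ : Perm (Fin n)) (s : Fin (n + 1)) :
    insertMax σ s s = Fin.last n := by
  simp [insertMax]

@[simp]
theorem insertMax_succAbove (σ : Perm (Fin n)) (s : Fin (n + 1)) (i : Fin n) :
    insertMax σ s (s.succAbove i) = (σ i).castSucc := by
  simp [insertMax]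

theorem insertMax_bijective (n : ℕ) :
    Function.Bijective fun x : Perm (Fin n) × Fin (n + 1) => insertMax x.1 x.2 := by
  rw [Fintype.bijective_iff_injective_and_card]
  refine ⟨?_, by simp [Fintype.card_perm, Nat.factorial_succ, mul_comm]⟩
  rintro ⟨σ, s⟩ ⟨τ, t⟩ h
  dsimp only at h
  obtain rfl : s = t := (insertMax σ s).injective <| by
    rw [insertMax_self, h, insertMax_self]
  refine Prod.ext (Equiv.ext fun i => Fin.castSucc_injective n ?_) rfl
  rw [← insertMax_succAbove σ s, h, insertMax_succAbove]

theorem forall_is213_insertMax_iff (σ : Perm (Fin n)) (s : Fin (n + 1))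
    (P : Fin (n + 1) → Fin (n + 1) → Fin (n + 1) → Prop) :
    (∀ i j k, Is213 (insertMax σ s) i j k → P i j k) ↔
      (∀ i j k, Is213 σ i j k → P (s.succAbove i) (s.succAbove j) (s.succAbove k)) ∧
        ∀ i j, i < j → σ j < σ i → j.castSucc < s → P (s.succAbove i) (s.succAbove j) s := by
  simp only [Is213, Fin.forall_iff_succAbove s, insertMax_self, insertMax_succAbove,
    Fin.succAbove_lt_succAbove_iff, Fin.succAbove_lt_iff_castSucc_lt,
    Fin.castSucc_lt_castSucc_iff, Fin.castSucc_lt_last, (Fin.le_last _).not_gt]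
  grind

/-- The site `t` of `σ` is active: if `σ` avoids 4213 and 2143, then so does `insertMax σ t`. This
is expressed through the occurrences of 213 in `σ`. -/
def IsActive (σ : Perm (Fin n)) (t : Fin (n + 1)) : Prop :=
  ∀ i j k, Is213 σ i j k → i.castSucc < t ∧ t ≤ j.castSucc ∨ k.castSucc < t

theorem avoidsD_insertMax_iff (σ : Perm (Fin n)) (s : Fin (n + 1)) :
    AvoidsD (insertMax σ s) ↔ AvoidsD σ ∧ IsActive σ s := by
  simp only [avoidsD_iff, IsActive]
  rw [forall_is213_insertMax_iff]
  simp only [Fin.forall_iff_succAbove s, insertMax_self, insertMax_succAbove,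
    Fin.succAbove_lt_succAbove_iff, Fin.succAbove_lt_iff_castSucc_lt,
    Fin.lt_succAbove_iff_le_castSucc, Fin.castSucc_lt_castSucc_iff, Fin.castSucc_lt_last,
    (Fin.le_last _).not_gt, lt_irrefl]
  grind

end InsertMax

section Runs

variable {n : ℕ}

/-- The entries of `σ` at the positions between the sites `t` and `u` are increasing. -/
def IsRun (σ : Perm (Fin n)) (t u : Fin (n + 1)) : Prop :=
  ∀ i j, t ≤ i.castSucc → i < j → j.castSucc < u → σ i < σ j

theorem isRun_self (σ : Perm (Fin n)) (t : Fin (n + 1)) : IsRun σ t t :=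
  fun _ _ hi hij hj =>
    (hi.trans_lt ((Fin.castSucc_lt_castSucc_iff.2 hij).trans hj)).false.elim

theorem IsRun.mono {σ : Perm (Fin n)} {t u v w : Fin (n + 1)} (h : IsRun σ t u) (htv : t ≤ v)
    (hwu : w ≤ u) : IsRun σ v w :=
  fun i j hi hij hj => h i j (htv.trans hi) hij (hj.trans_le hwu)

theorem IsRun.trans_of_lt {σ : Perm (Fin n)} {t u v w : Fin (n + 1)} (htu : IsRun σ t u)
    (hvw : IsRun σ v w) (hvu : v < u) : IsRun σ t w := by
  intro i j hi hij hj
  obtain ⟨k, rfl⟩ := Fin.exists_castSucc_eq.2 (hvu.trans_le (Fin.le_last u)).ne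
  rcases le_or_gt k i with hki | hik
  · exact hvw i j hki hij hj
  rcases le_or_gt j k with hjk | hkj
  · exact htu i j hi hij (lt_of_le_of_lt hjk hvu)
  · exact (htu i k hi hik hvu).trans (hvw k j le_rfl hkj hj)

theorem castSucc_succAbove_lt_castSucc_iff {s t : Fin (n + 1)} (hts : t ≤ s) (i : Fin n) :
    (s.succAbove i).castSucc < t.castSucc ↔ i.castSucc < t := by
  simp only [Fin.succAbove, Fin.lt_def, Fin.le_def] at *
  split
  · simp
  · simp only [Fin.val_castSucc, Fin.val_succ] at *; omega

theorem castSucc_succAbove_lt_succ_iff {s t : Fin (n + 1)} (hst : s ≤ t) (i : Fin n) :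
    (s.succAbove i).castSucc < t.succ ↔ i.castSucc < t := by
  simp only [Fin.succAbove, Fin.lt_def, Fin.le_def] at *
  split <;> simp only [Fin.val_castSucc, Fin.val_succ] at * <;> omega

theorem isRun_insertMax_iff (σ : Perm (Fin n)) (s : Fin (n + 1)) (t u : Fin (n + 2)) :
    IsRun (insertMax σ s) t u ↔
      (∀ i j, t ≤ (s.succAbove i).castSucc → i < j → (s.succAbove j).castSucc < u → σ i < σ j) ∧
        ∀ j, t ≤ s.castSucc → s ≤ j.castSucc → ¬ (s.succAbove j).castSucc < u := by
  simp only [IsRun, Fin.forall_iff_succAbove s, insertMax_self, insertMax_succAbove,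
    Fin.succAbove_lt_succAbove_iff, Fin.lt_succAbove_iff_le_castSucc,
    Fin.castSucc_lt_castSucc_iff, Fin.castSucc_lt_last, (Fin.le_last _).not_gt, lt_irrefl]
  grind

variable {σ : Perm (Fin n)} {s t u : Fin (n + 1)}

theorem isRun_insertMax_castSucc_castSucc (htu : t ≤ u) (hus : u ≤ s) :
    IsRun (insertMax σ s) t.castSucc u.castSucc ↔ IsRun σ t u := by
  have hlt := castSucc_succAbove_lt_castSucc_iff (htu.trans hus)
  rw [isRun_insertMax_iff]
  simp only [← not_lt, hlt, castSucc_succAbove_lt_castSucc_iff hus, Fin.castSucc_lt_castSucc_iff]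
  grind [IsRun]

theorem isRun_insertMax_castSucc_succ (hts : t ≤ s) (hsu : s ≤ u) :
    IsRun (insertMax σ s) t.castSucc u.succ ↔ u = s ∧ IsRun σ t s := by
  have hus : (∀ j : Fin n, s ≤ j.castSucc → ¬ j.castSucc < u) ↔ u ≤ s := by
    refine ⟨fun h => ?_, fun h j hj => (h.trans hj).not_gt⟩
    by_contra! hlt
    obtain ⟨j, rfl⟩ := Fin.exists_castSucc_eq.2 (hlt.trans_le (Fin.le_last u)).ne
    exact h j le_rfl hlt
  have hlt := castSucc_succAbove_lt_castSucc_iff hts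
  rw [isRun_insertMax_iff]
  simp only [← not_lt, hlt, castSucc_succAbove_lt_succ_iff hsu, Fin.castSucc_lt_castSucc_iff]
  grind [IsRun]

theorem isRun_zero_insertMax_castSucc (hts : t ≤ s) :
    IsRun (insertMax σ s) 0 t.castSucc ↔ IsRun σ 0 t :=
  isRun_insertMax_castSucc_castSucc (Fin.zero_le t) hts

theorem isRun_zero_insertMax_succ (hst : s ≤ t) :
    IsRun (insertMax σ s) 0 t.succ ↔ t = s ∧ IsRun σ 0 s :=
  isRun_insertMax_castSucc_succ (Fin.zero_le s) hst

theorem isRun_insertMax_succ_succ (hst : s ≤ t) (hsu : s ≤ u) :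
    IsRun (insertMax σ s) t.succ u.succ ↔ IsRun σ t u := by
  have hlt := castSucc_succAbove_lt_succ_iff hst
  rw [isRun_insertMax_iff]
  simp only [← not_lt, hlt, castSucc_succAbove_lt_succ_iff hsu, Fin.castSucc_lt_succ_iff]
  grind [IsRun]

theorem isActive_insertMax_castSucc (hts : t ≤ s) :
    IsActive (insertMax σ s) t.castSucc ↔ IsActive σ t ∧ IsRun σ 0 t ∧ IsRun σ t s := by
  have hlt_iff (i j : Fin n) (hij : i < j) : σ i < σ j ↔ ¬ σ j < σ i :=
    (not_lt.trans (σ.injective.ne hij.ne).le_iff_lt).symm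
  rw [IsActive, forall_is213_insertMax_iff]
  simp only [← not_lt, castSucc_succAbove_lt_castSucc_iff hts, Fin.castSucc_lt_castSucc_iff]
  grind [IsRun, IsActive]

theorem isActive_insertMax_succ (hst : s ≤ t) :
    IsActive (insertMax σ s) t.succ ↔ IsActive σ t := by
  rw [IsActive, forall_is213_insertMax_iff]
  simp only [← not_lt, castSucc_succAbove_lt_succ_iff hst, Fin.castSucc_lt_succ_iff]
  grind [IsActive]

end Runs

section Sites

variable {n : ℕ}

/-- The site of `σ` at which the initial increasing run of `σ` ends. -/
def IsInitialRunEnd (σ : Perm (Fin n)) (p : Fin (n + 1)) : Prop :=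
  ∀ t, IsRun σ 0 t ↔ t ≤ p

theorem IsInitialRunEnd.isRun_zero {σ : Perm (Fin n)} {p : Fin (n + 1)}
    (hp : IsInitialRunEnd σ p) : IsRun σ 0 p :=
  (hp p).2 le_rfl

theorem IsInitialRunEnd.isRun_iff {σ : Perm (Fin n)} {p s : Fin (n + 1)}
    (hp : IsInitialRunEnd σ p) (hsp : s < p) (t : Fin (n + 1)) : IsRun σ s t ↔ t ≤ p :=
  ⟨fun h => (hp t).1 (hp.isRun_zero.trans_of_lt h hsp),
    fun h => hp.isRun_zero.mono (Fin.zero_le s) h⟩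

open Classical in
/-- The active sites of `σ`. -/
noncomputable def activeSites (σ : Perm (Fin n)) : Finset (Fin (n + 1)) :=
  {t | IsActive σ t}

/-- The active sites of `σ` before the site `p`. -/
noncomputable def sitesBefore (σ : Perm (Fin n)) (p : Fin (n + 1)) : Finset (Fin (n + 1)) :=
  {t ∈ activeSites σ | t < p}

open Classical in
/-- The active sites of `σ` beyond the site `p` that lie within or at the end of the increasing run
of `σ` starting at `p`. -/
noncomputable def sitesInRun (σ : Perm (Fin n)) (p : Fin (n + 1)) : Finset (Fin (n + 1)) :=
  {t ∈ activeSites σ | p < t ∧ IsRun σ p t}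

open Classical in
/-- The active sites of `σ` beyond the increasing run of `σ` starting at the site `p`. -/
noncomputable def sitesBeyondRun (σ : Perm (Fin n)) (p : Fin (n + 1)) : Finset (Fin (n + 1)) :=
  {t ∈ activeSites σ | p < t ∧ ¬ IsRun σ p t}

@[simp]
theorem mem_activeSites {σ : Perm (Fin n)} {t : Fin (n + 1)} :
    t ∈ activeSites σ ↔ IsActive σ t := by
  simp [activeSites]

@[simp]
theorem mem_sitesBefore {σ : Perm (Fin n)} {p t : Fin (n + 1)} :
    t ∈ sitesBefore σ p ↔ IsActive σ t ∧ t < p := by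
  simp [sitesBefore]

@[simp]
theorem mem_sitesInRun {σ : Perm (Fin n)} {p t : Fin (n + 1)} :
    t ∈ sitesInRun σ p ↔ IsActive σ t ∧ p < t ∧ IsRun σ p t := by
  simp [sitesInRun]

@[simp]
theorem mem_sitesBeyondRun {σ : Perm (Fin n)} {p t : Fin (n + 1)} :
    t ∈ sitesBeyondRun σ p ↔ IsActive σ t ∧ p < t ∧ ¬ IsRun σ p t := by
  simp [sitesBeyondRun]

theorem exists_castSucc_or_succ (s : Fin (n + 1)) (t' : Fin (n + 2)) :
    (∃ t ≤ s, t.castSucc = t') ∨ ∃ t ≥ s, t.succ = t' := by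
  rcases le_or_gt t' s.castSucc with h | h
  · obtain ⟨t, rfl⟩ := Fin.exists_castSucc_eq.2 (h.trans_lt (Fin.castSucc_lt_last s)).ne
    exact .inl ⟨t, h, rfl⟩
  · obtain ⟨t, rfl⟩ := Fin.exists_succ_eq.2 ((Fin.zero_le _).trans_lt h).ne'
    exact .inr ⟨t, Fin.castSucc_lt_succ_iff.1 h, rfl⟩

theorem eq_map_castSuccEmb {s : Fin (n + 1)} {S : Finset (Fin (n + 1))}
    {T : Finset (Fin (n + 2))} (hS : ∀ t ∈ S, t ≤ s)
    (hcast : ∀ t ≤ s, t.castSucc ∈ T ↔ t ∈ S) (hsucc : ∀ t ≥ s, t.succ ∉ T) :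
    T = S.map Fin.castSuccEmb := by
  ext t'
  rw [Finset.mem_map]
  constructor
  · intro ht'
    obtain ⟨t, ht, rfl⟩ | ⟨t, ht, rfl⟩ := exists_castSucc_or_succ s t'
    · exact ⟨t, (hcast t ht).1 ht', rfl⟩
    · exact absurd ht' (hsucc t ht)
  · rintro ⟨t, ht, rfl⟩
    exact (hcast t (hS t ht)).2 ht

theorem eq_map_succEmb {s : Fin (n + 1)} {S : Finset (Fin (n + 1))}
    {T : Finset (Fin (n + 2))} (hS : ∀ t ∈ S, s ≤ t)
    (hcast : ∀ t ≤ s, t.castSucc ∉ T) (hsucc : ∀ t ≥ s, t.succ ∈ T ↔ t ∈ S) :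
    T = S.map (Fin.succEmb (n + 1)) := by
  ext t'
  rw [Finset.mem_map]
  constructor
  · intro ht'
    obtain ⟨t, ht, rfl⟩ | ⟨t, ht, rfl⟩ := exists_castSucc_or_succ s t'
    · exact absurd ht' (hcast t ht)
    · exact ⟨t, (hsucc t ht).1 ht', rfl⟩
  · rintro ⟨t, ht, rfl⟩
    exact (hsucc t (hS t ht)).2 ht

variable {σ : Perm (Fin n)} {p s : Fin (n + 1)}

theorem sum_activeSites {M : Type*} [AddCommMonoid M] (hp : IsActive σ p)
    (f : Fin (n + 1) → M) :
    ∑ t ∈ activeSites σ, f t = ∑ t ∈ sitesBefore σ p, f t + f p + ∑ t ∈ sitesInRun σ p, f t +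
      ∑ t ∈ sitesBeyondRun σ p, f t := by
  classical
  have hle : {t ∈ activeSites σ | ¬ t < p} = insert p {t ∈ activeSites σ | p < t} := by
    grind [mem_activeSites]
  rw [← sum_filter_add_sum_filter_not (activeSites σ) (· < p), hle, sum_insert (by simp),
    ← sum_filter_add_sum_filter_not {t ∈ activeSites σ | p < t} (IsRun σ p)]
  simp only [filter_filter, sitesBefore, sitesInRun, sitesBeyondRun, add_assoc]

theorem isInitialRunEnd_insertMax_succ (hs : IsRun σ 0 s) :
    IsInitialRunEnd (insertMax σ s) s.succ := by
  intro t'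
  obtain ⟨t, ht, rfl⟩ | ⟨t, ht, rfl⟩ := exists_castSucc_or_succ s t'
  · simp [isRun_zero_insertMax_castSucc ht, hs.mono le_rfl ht, (Fin.castSucc_lt_succ_iff.2 ht).le]
  · simp [isRun_zero_insertMax_succ ht, hs, ge_antisymm_iff, ht]

theorem sitesBefore_insertMax_succ (hs : IsRun σ 0 s) :
    sitesBefore (insertMax σ s) s.succ = {t ∈ activeSites σ | t ≤ s}.map Fin.castSuccEmb := by
  refine eq_map_castSuccEmb (s := s) (by simp) (fun t ht => ?_) fun t ht => ?_
  · simp [isActive_insertMax_castSucc ht, ht, hs.mono le_rfl ht, hs.mono (Fin.zero_le t) le_rfl]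
  · simp [ht]

theorem sitesInRun_insertMax_succ :
    sitesInRun (insertMax σ s) s.succ = (sitesInRun σ s).map (Fin.succEmb (n + 1)) := by
  refine eq_map_succEmb (s := s) (by grind [mem_sitesInRun]) (fun t ht => ?_) fun t ht => ?_
  · simp [(Fin.castSucc_lt_succ_iff.2 ht).not_gt]
  · simp [isActive_insertMax_succ ht, isRun_insertMax_succ_succ le_rfl ht]

theorem sitesBeyondRun_insertMax_succ :
    sitesBeyondRun (insertMax σ s) s.succ = (sitesBeyondRun σ s).map (Fin.succEmb (n + 1)) := by
  refine eq_map_succEmb (s := s) (by grind [mem_sitesBeyondRun]) (fun t ht => ?_) fun t ht => ?_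
  · simp [(Fin.castSucc_lt_succ_iff.2 ht).not_gt]
  · simp [isActive_insertMax_succ ht, isRun_insertMax_succ_succ le_rfl ht]

section InsertWithinSecondRun

variable (hp : IsInitialRunEnd σ p) (hps : p < s) (hrun : IsRun σ p s)

include hp hps

theorem isInitialRunEnd_insertMax_castSucc : IsInitialRunEnd (insertMax σ s) p.castSucc := by
  intro t'
  obtain ⟨t, ht, rfl⟩ | ⟨t, ht, rfl⟩ := exists_castSucc_or_succ s t'
  · simp [isRun_zero_insertMax_castSucc ht, hp t]
  · simp [isRun_zero_insertMax_succ ht, hp s, hps.not_ge, (hps.trans_le ht).le]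

theorem sitesBefore_insertMax_castSucc : sitesBefore (insertMax σ s) p.castSucc = ∅ := by
  rw [eq_empty_iff_forall_notMem]
  intro t'
  obtain ⟨t, ht, rfl⟩ | ⟨t, ht, rfl⟩ := exists_castSucc_or_succ s t'
  · rw [mem_sitesBefore, isActive_insertMax_castSucc ht, Fin.castSucc_lt_castSucc_iff]
    rintro ⟨⟨-, -, hts⟩, htp⟩
    exact hps.not_ge ((hp s).1 (hp.isRun_zero.trans_of_lt hts htp))
  · simp [(Fin.castSucc_lt_succ_iff.2 (hps.le.trans ht)).le]

include hrun

theorem sitesInRun_insertMax_castSucc (hs : IsActive σ s) :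
    sitesInRun (insertMax σ s) p.castSucc = {s.succ} := by
  rw [← Fin.coe_succEmb, ← map_singleton]
  refine eq_map_succEmb (s := s) (by simp) (fun t ht => ?_) fun t ht => ?_
  · grind [mem_sitesInRun, isActive_insertMax_castSucc, hp t, Fin.castSucc_lt_castSucc_iff]
  · simp only [mem_sitesInRun, mem_singleton, isActive_insertMax_succ ht,
      isRun_insertMax_castSucc_succ hps.le ht, Fin.castSucc_lt_succ_iff]
    grind

theorem sitesBeyondRun_insertMax_castSucc :
    sitesBeyondRun (insertMax σ s) p.castSucc =
      {t ∈ activeSites σ | s < t}.map (Fin.succEmb (n + 1)) := by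
  refine eq_map_succEmb (s := s) (by grind) (fun t ht => ?_) fun t ht => ?_
  · grind [mem_sitesBeyondRun, isActive_insertMax_castSucc, hp t, Fin.castSucc_lt_castSucc_iff]
  · simp only [mem_sitesBeyondRun, mem_filter, mem_activeSites, isActive_insertMax_succ ht,
      isRun_insertMax_castSucc_succ hps.le ht, Fin.castSucc_lt_succ_iff]
    grind

end InsertWithinSecondRun

section InsertBeyondRuns

variable (h : ∀ t ≤ s, IsActive σ t → IsRun σ 0 t → ¬ IsRun σ t s)

include h

theorem activeSites_insertMax :
    activeSites (insertMax σ s) = {t ∈ activeSites σ | s ≤ t}.map (Fin.succEmb (n + 1)) := by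
  refine eq_map_succEmb (s := s) (by grind) (fun t ht => ?_) fun t ht => ?_
  · grind [mem_activeSites, isActive_insertMax_castSucc]
  · simp [isActive_insertMax_succ ht, ht]

theorem not_isRun_zero_insertMax (hs : IsActive σ s) (t : Fin (n + 2))
    (ht : IsActive (insertMax σ s) t) : ¬ IsRun (insertMax σ s) 0 t := by
  have ht' := mem_activeSites.2 ht
  rw [activeSites_insertMax h] at ht'
  obtain ⟨u, hu, rfl⟩ := Finset.mem_map.1 ht'
  rw [Fin.coe_succEmb, isRun_zero_insertMax_succ (by grind)]
  rintro ⟨-, h0⟩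
  exact h s le_rfl hs h0 (isRun_self σ s)

end InsertBeyondRuns

end Sites

section Extensions

/-- The number of ways of extending `σ` to a permutation avoiding 4213 and 2143 by inserting `k`
successive maxima, provided that `σ` avoids both patterns. -/
noncomputable def extensionCount : ℕ → ∀ {n : ℕ}, Perm (Fin n) → ℕ
  | 0, _, _ => 1
  | k + 1, _, σ => ∑ s ∈ activeSites σ, extensionCount k (insertMax σ s)

open scoped Classical in
theorem sum_extensionCount (k m : ℕ) :
    ∑ σ : Perm (Fin m) with AvoidsD σ, extensionCount k σ = dCount (m + k) := by
  induction k generalizing m with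
  | zero => simp [extensionCount, dCount, Nat.card_eq_fintype_card, Fintype.card_subtype]
  | succ k ih =>
    rw [← add_assoc, add_right_comm, ← ih (m + 1), sum_filter, sum_filter,
      ← (insertMax_bijective m).sum_comp, Fintype.sum_prod_type]
    refine sum_congr rfl fun σ _ => ?_
    by_cases hσ : AvoidsD σ <;>
      simp [avoidsD_insertMax_iff, hσ, extensionCount, activeSites, sum_filter]

theorem dCount_eq_extensionCount (n : ℕ) : dCount n = extensionCount n (1 : Perm (Fin 0)) := by
  simpa [Subsingleton.elim _ (1 : Perm (Fin 0)), avoidsD_iff, filter_true_of_mem]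
    using (sum_extensionCount n 0).symm

variable {n : ℕ} {σ : Perm (Fin n)} {p s : Fin (n + 1)}

theorem card_activeSites_insertMax (hs : IsActive σ s)
    (h : ∀ t ≤ s, IsActive σ t → IsRun σ 0 t → ¬ IsRun σ t s) :
    #(activeSites (insertMax σ s)) = #{t ∈ activeSites σ | s < t} + 1 := by
  have hle : {t ∈ activeSites σ | s ≤ t} = insert s {t ∈ activeSites σ | s < t} := by
    grind [mem_activeSites]
  rw [activeSites_insertMax h, card_map, hle, card_insert_of_notMem (by simp)]

theorem extensionCount_of_not_isRun_zero (k : ℕ) (h : ∀ t, IsActive σ t → ¬ IsRun σ 0 t) :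
    extensionCount k σ = (#(activeSites σ)).multichoose k := by
  induction k generalizing n with
  | zero => simp [extensionCount]
  | succ k ih =>
    rw [extensionCount, ← sum_range_multichoose_succ,
      ← sum_card_filter_lt (activeSites σ) fun j => (j + 1).multichoose k]
    refine sum_congr rfl fun s hs => ?_
    have hs := mem_activeSites.1 hs
    have hrun : ∀ t ≤ s, IsActive σ t → IsRun σ 0 t → ¬ IsRun σ t s :=
      fun t _ ht h0 => absurd h0 (h t ht)
    rw [ih (not_isRun_zero_insertMax hrun hs), card_activeSites_insertMax hs hrun]

section InitialRunEnd

variable (hp : IsInitialRunEnd σ p)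

include hp

theorem card_sitesBefore_insertMax_succ (hsp : s < p) :
    #(sitesBefore (insertMax σ s) s.succ) =
      #(sitesBefore σ p) - #{t ∈ sitesBefore σ p | s < t} := by
  have hle : {t ∈ activeSites σ | t ≤ s} = {t ∈ sitesBefore σ p | ¬ s < t} := by
    grind [mem_activeSites, mem_sitesBefore]
  rw [sitesBefore_insertMax_succ (hp.isRun_zero.mono le_rfl hsp.le), card_map, hle,
    ← card_filter_add_card_filter_not (s := sitesBefore σ p) (s < ·), Nat.add_sub_cancel_left]

theorem card_sitesInRun_insertMax_succ (hpσ : IsActive σ p) (hsp : s < p) :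
    #(sitesInRun (insertMax σ s) s.succ) = #{t ∈ sitesBefore σ p | s < t} + 1 := by
  have hrun : sitesInRun σ s = insert p {t ∈ sitesBefore σ p | s < t} := by
    ext t
    rw [mem_sitesInRun, hp.isRun_iff hsp]
    grind [mem_sitesBefore]
  rw [sitesInRun_insertMax_succ, card_map, hrun, card_insert_of_notMem (by simp)]

theorem card_sitesBeyondRun_insertMax_succ (hsp : s < p) :
    #(sitesBeyondRun (insertMax σ s) s.succ) = #(sitesInRun σ p) + #(sitesBeyondRun σ p) := by
  have hbeyond : sitesBeyondRun σ s = sitesInRun σ p ∪ sitesBeyondRun σ p := by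
    ext t
    rw [mem_sitesBeyondRun, hp.isRun_iff hsp]
    grind [mem_sitesInRun, mem_sitesBeyondRun]
  have hdisj : Disjoint (sitesInRun σ p) (sitesBeyondRun σ p) := by
    grind [disjoint_left, mem_sitesInRun, mem_sitesBeyondRun]
  rw [sitesBeyondRun_insertMax_succ, card_map, hbeyond, card_union_of_disjoint hdisj]

theorem card_sitesBefore_insertMax_self_succ (hpσ : IsActive σ p) :
    #(sitesBefore (insertMax σ p) p.succ) = #(sitesBefore σ p) + 1 := by
  have hle : {t ∈ activeSites σ | t ≤ p} = insert p (sitesBefore σ p) := by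
    grind [mem_activeSites, mem_sitesBefore]
  rw [sitesBefore_insertMax_succ hp.isRun_zero, card_map, hle, card_insert_of_notMem (by simp)]

end InitialRunEnd

theorem card_sitesBeyondRun_insertMax_castSucc (hp : IsInitialRunEnd σ p)
    (hs : s ∈ sitesInRun σ p) :
    #(sitesBeyondRun (insertMax σ s) p.castSucc) =
      #{t ∈ sitesInRun σ p | s < t} + #(sitesBeyondRun σ p) := by
  obtain ⟨-, hps, hrun⟩ := mem_sitesInRun.1 hs
  have hbeyond (t) (ht : t ∈ sitesBeyondRun σ p) : s < t := by
    by_contra! hts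
    exact (mem_sitesBeyondRun.1 ht).2.2 (hrun.mono le_rfl hts)
  have hlt : {t ∈ activeSites σ | s < t} = {t ∈ sitesInRun σ p | s < t} ∪ sitesBeyondRun σ p := by
    ext t
    grind [mem_activeSites, mem_sitesInRun, mem_sitesBeyondRun]
  have hdisj : Disjoint {t ∈ sitesInRun σ p | s < t} (sitesBeyondRun σ p) := by
    grind [disjoint_left, mem_sitesInRun, mem_sitesBeyondRun]
  rw [sitesBeyondRun_insertMax_castSucc hp hps hrun, card_map, hlt, card_union_of_disjoint hdisj]

theorem extensionCount_insertMax_of_mem_sitesBeyondRun (k : ℕ) (hp : IsInitialRunEnd σ p)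
    (hs : s ∈ sitesBeyondRun σ p) :
    extensionCount k (insertMax σ s) = (#{t ∈ sitesBeyondRun σ p | s < t} + 1).multichoose k := by
  obtain ⟨hsσ, hps, hrun⟩ := mem_sitesBeyondRun.1 hs
  have hdead : ∀ t ≤ s, IsActive σ t → IsRun σ 0 t → ¬ IsRun σ t s := by
    intro t _ _ h0 hts
    exact hrun (hts.mono ((hp t).1 h0) le_rfl)
  have hlt : {t ∈ activeSites σ | s < t} = {t ∈ sitesBeyondRun σ p | s < t} := by
    ext t
    have (hst : s < t) (h : IsRun σ p t) : IsRun σ p s := h.mono le_rfl hst.le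
    grind [mem_activeSites, mem_sitesBeyondRun]
  rw [extensionCount_of_not_isRun_zero k (not_isRun_zero_insertMax hdead hsσ),
    card_activeSites_insertMax hsσ hdead, hlt]

end Extensions

section ProfileCount

/-- The value of `f` at `n`, written so that the kernel evaluates `n` to a numeral before it
unfolds `f`. In `profileCount` this lets the kernel share repeated recursive calls. -/
def force {α : Type*} (n : ℕ) (f : ℕ → α) : α := Nat.rec (f 0) (fun m _ => f (m + 1)) n

theorem force_eq {α : Type*} (n : ℕ) (f : ℕ → α) : force n f = f n := by
  cases n <;> rfl

/-- The number of ways of inserting `k` successive maxima into a permutation that has an active site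
at the end of its initial increasing run, `a` active sites before it, `b` active sites in the next
increasing run and `c` active sites beyond. -/
def profileCount : ℕ → ℕ → ℕ → ℕ → ℕ
  | 0, _, _, _ => 1
  | k + 1, a, b, c => force a fun a => force b fun b => force c fun c =>
    ∑ j ∈ range a, profileCount k (a - j) (j + 1) (b + c) + profileCount k (a + 1) b c +
      ∑ j ∈ range b, profileCount k 0 1 (j + c) + (c + k).choose (k + 1)

theorem profileCount_succ (k a b c : ℕ) :
    profileCount (k + 1) a b c =
      ∑ j ∈ range a, profileCount k (a - j) (j + 1) (b + c) + profileCount k (a + 1) b c +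
        ∑ j ∈ range b, profileCount k 0 1 (j + c) + c.multichoose (k + 1) := by
  simp only [profileCount, force_eq, Nat.multichoose_eq, Nat.add_succ_sub_one]

theorem extensionCount_eq_profileCount (k : ℕ) {n : ℕ} {σ : Perm (Fin n)} {p : Fin (n + 1)}
    (hp : IsInitialRunEnd σ p) (hpσ : IsActive σ p) :
    extensionCount k σ =
      profileCount k #(sitesBefore σ p) #(sitesInRun σ p) #(sitesBeyondRun σ p) := by
  induction k generalizing n with
  | zero => rfl
  | succ k ih =>
    have insert_initial {s} (hs : IsActive σ s) (h0 : IsRun σ 0 s) :=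
      ih (isInitialRunEnd_insertMax_succ h0) ((isActive_insertMax_succ le_rfl).2 hs)
    have insert_before (s) (hs : s ∈ sitesBefore σ p) := by
      obtain ⟨hsσ, hsp⟩ := mem_sitesBefore.1 hs
      have h := insert_initial hsσ ((hp s).2 hsp.le)
      rwa [card_sitesBefore_insertMax_succ hp hsp, card_sitesInRun_insertMax_succ hp hpσ hsp,
        card_sitesBeyondRun_insertMax_succ hp hsp] at h
    have insert_end := by
      have h := insert_initial hpσ hp.isRun_zero
      rwa [card_sitesBefore_insertMax_self_succ hp hpσ, sitesInRun_insertMax_succ,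
        sitesBeyondRun_insertMax_succ, card_map, card_map] at h
    have insert_inRun (s) (hs : s ∈ sitesInRun σ p) := by
      obtain ⟨hsσ, hps, hrun⟩ := mem_sitesInRun.1 hs
      have h := ih (isInitialRunEnd_insertMax_castSucc hp hps)
        ((isActive_insertMax_castSucc hps.le).2 ⟨hpσ, hp.isRun_zero, hrun⟩)
      rwa [sitesBefore_insertMax_castSucc hp hps, card_empty,
        sitesInRun_insertMax_castSucc hp hps hrun hsσ, card_singleton,
        card_sitesBeyondRun_insertMax_castSucc hp hs] at h
    have insert_beyond (s) (hs : s ∈ sitesBeyondRun σ p) :=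
      extensionCount_insertMax_of_mem_sitesBeyondRun k hp hs
    rw [extensionCount, sum_activeSites hpσ, profileCount_succ, sum_congr rfl insert_before,
      insert_end, sum_congr rfl insert_inRun, sum_congr rfl insert_beyond,
      ← sum_range_multichoose_succ, ← sum_card_filter_lt (sitesBefore σ p),
      ← sum_card_filter_lt (sitesInRun σ p), ← sum_card_filter_lt (sitesBeyondRun σ p)]

theorem dCount_eq_profileCount (n : ℕ) : dCount n = profileCount n 0 0 0 := by
  have hp : IsInitialRunEnd (1 : Perm (Fin 0)) 0 := fun t => by simp [IsRun, Fin.fin_one_eq_zero t]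
  have hpσ : IsActive (1 : Perm (Fin 0)) 0 := fun i => i.elim0
  rw [dCount_eq_extensionCount, extensionCount_eq_profileCount n hp hpσ]
  congr 1 <;> simp [Finset.eq_empty_iff_forall_notMem]

end ProfileCount

end MaxInsertion

theorem dCount_initial_terms :
    dCount 1 = 1 ∧ dCount 2 = 2 ∧ dCount 3 = 6 ∧ dCount 4 = 22 ∧ dCount 5 = 88 ∧
    dCount 6 = 366 ∧ dCount 7 = 1556 ∧ dCount 8 = 6720 ∧ dCount 9 = 29396 ∧
    dCount 10 = 129996 ∧ dCount 11 = 580276 ∧ dCount 12 = 2611290 := by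
  simp only [MaxInsertion.dCount_eq_profileCount]
  decide +kernel
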